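/- Let A be a unital C*-algebra, (X, ‖·‖_X) a quasi-normed A-bimodule with modulus of concavity C ≥ 1, δ : A → X a derivation, and J := {x ∈ A : the linear map u ↦ δ(xu) from A to X is bounded}. Then the restriction of δ to J is bounded: there exists K ≥ 0 such that ‖δ(x)‖_X ≤ K‖x‖_A for all x ∈ J. -/

import Mathlib

open MulOpposite
open Filter Topology

/-- The resolvent `r = (b + ε)⁻¹` of a positive element satisfies `‖r b² - b‖ ≤ ε`. -/
theorem exists_resolvent_approx {A : Type*} [CStarAlgebra A] [PartialOrder A] [StarOrderedRing A]
    {b : A} (hb : 0 ≤ b) {ε : ℝ} (hε : 0 < ε) :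
    ∃ r : A, IsSelfAdjoint r ∧ b * r + (ε : ℂ) • r = 1 ∧ ‖r * (b * b) - b‖ ≤ ε := by
  have hsa : IsSelfAdjoint b := .of_nonneg hb
  have hpos : ∀ t ∈ spectrum ℝ b, 0 ≤ t := fun t ht => spectrum_nonneg_of_nonneg hb ht
  have hcont : ContinuousOn (fun t : ℝ => (t + ε)⁻¹) (spectrum ℝ b) :=
    ContinuousOn.inv₀ (by fun_prop) fun t ht => by have := hpos t ht; positivity
  refine ⟨cfc (fun t : ℝ => (t + ε)⁻¹) b, cfc_predicate _ _, ?_, ?_⟩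
  · have h1 : b * cfc (fun t : ℝ => (t + ε)⁻¹) b + ε • cfc (fun t : ℝ => (t + ε)⁻¹) b
        = cfc (fun t : ℝ => t * (t + ε)⁻¹ + ε * (t + ε)⁻¹) b := by
      rw [cfc_add (a := b) (fun t : ℝ => t * (t + ε)⁻¹) (fun t : ℝ => ε * (t + ε)⁻¹)
        (by fun_prop) (by fun_prop), cfc_mul (fun t : ℝ => t) (fun t : ℝ => (t + ε)⁻¹) b,
        cfc_id' ℝ b, cfc_const_mul ε (fun t : ℝ => (t + ε)⁻¹) b]
    rw [Complex.coe_smul, h1, ← cfc_one ℝ b]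
    refine cfc_congr fun t ht => ?_
    have := hpos t ht
    simp only [Pi.one_apply]
    field_simp
  · have h1 : cfc (fun t : ℝ => (t + ε)⁻¹) b * (b * b) - b
        = cfc (fun t : ℝ => (t + ε)⁻¹ * (t * t) - t) b := by
      rw [cfc_sub (a := b) (fun t : ℝ => (t + ε)⁻¹ * (t * t)) (fun t : ℝ => t)
        (by fun_prop) (by fun_prop), cfc_mul (fun t : ℝ => (t + ε)⁻¹) (fun t : ℝ => t * t) b,
        cfc_mul (fun t : ℝ => t) (fun t : ℝ => t) b, cfc_id' ℝ b]
    rw [h1]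
    refine norm_cfc_le hε.le fun t ht => ?_
    have := hpos t ht
    rw [Real.norm_eq_abs, abs_le]
    have h2 : (t + ε)⁻¹ * (t * t) - t = - (ε * t / (t + ε)) := by field_simp; ring
    have h3 : ε * t / (t + ε) ≤ ε := by
      rw [div_le_iff₀ (by positivity)]; nlinarith
    have h4 : 0 ≤ ε * t / (t + ε) := by positivity
    constructor <;> linarith

theorem norm_mul_le_of_mul_star_le {A : Type*} [CStarAlgebra A] [PartialOrder A]
    [StarOrderedRing A] {d x g : A} (hd : IsSelfAdjoint d) (hg : IsSelfAdjoint g)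
    (h : x * star x ≤ g * g) : ‖d * x‖ ≤ ‖d * g‖ := by
  have h1 : (d * x) * star (d * x) ≤ (d * g) * star (d * g) := by
    have := star_right_conjugate_le_conjugate h d
    simpa [mul_assoc, hd.star_eq, hg.star_eq] using this
  have h2 := CStarAlgebra.norm_le_norm_of_nonneg_of_le (mul_star_self_nonneg _) h1
  rw [CStarRing.norm_self_mul_star, CStarRing.norm_self_mul_star] at h2
  exact (mul_self_le_mul_self_iff (norm_nonneg _) (norm_nonneg _)).2 h2

/-- If `x x* ≤ b⁴` with `b ≥ 0`, then `x` factors through `b` on the left; the other factor is the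
limit of `(b + ε)⁻¹ x` as `ε → 0`. -/
theorem exists_eq_mul_of_mul_star_le {A : Type*} [CStarAlgebra A] [PartialOrder A]
    [StarOrderedRing A] {b x : A} (hb : 0 ≤ b) (h : x * star x ≤ (b * b) * (b * b)) :
    ∃ c : A, x = b * c ∧ ‖c‖ ≤ ‖b‖ := by
  have hsa : IsSelfAdjoint b := .of_nonneg hb
  have hbb : IsSelfAdjoint (b * b) := by simp [IsSelfAdjoint, hsa.star_eq]
  let e : ℕ → ℝ := fun n => 1 / ((n : ℝ) + 1)
  have he : ∀ n, 0 < e n := fun n => by positivity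
  have he0 : Tendsto e atTop (𝓝 0) := tendsto_one_div_add_atTop_nhds_zero_nat
  choose r hr hr1 hr2 using fun n => exists_resolvent_approx hb (he n)
  have hlim : Tendsto (fun n => r n * (b * b)) atTop (𝓝 b) := by
    rw [tendsto_iff_norm_sub_tendsto_zero]
    exact squeeze_zero (fun n => norm_nonneg _) hr2 he0
  have hcau : CauchySeq fun n => r n * x := by
    have hc := hlim.cauchySeq
    rw [Metric.cauchySeq_iff] at hc ⊢
    intro η hη
    obtain ⟨N, hN⟩ := hc η hη
    refine ⟨N, fun m hm n hn => ?_⟩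
    refine lt_of_le_of_lt ?_ (hN m hm n hn)
    rw [dist_eq_norm, dist_eq_norm, ← sub_mul, ← sub_mul]
    exact norm_mul_le_of_mul_star_le ((hr m).sub (hr n)) hbb h
  obtain ⟨c, hc⟩ := cauchySeq_tendsto_of_complete hcau
  refine ⟨c, ?_, le_of_tendsto_of_tendsto' hc.norm hlim.norm
    fun n => norm_mul_le_of_mul_star_le (hr n) hbb h⟩
  have h1 : Tendsto (fun n => b * (r n * x) + (e n : ℂ) • (r n * x)) atTop
      (𝓝 (b * c + ((0 : ℝ) : ℂ) • c)) :=
    (hc.const_mul b).add (((Complex.continuous_ofReal.tendsto 0).comp he0).smul hc)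
  have h2 : ∀ n, b * (r n * x) + (e n : ℂ) • (r n * x) = x := fun n => by
    rw [← mul_assoc, ← smul_mul_assoc, ← add_mul, hr1, one_mul]
  simp only [h2, Complex.ofReal_zero, zero_smul, add_zero] at h1
  exact tendsto_nhds_unique tendsto_const_nhds h1

/-- A closed left ideal containing the square of a positive element contains the element. -/
theorem mem_of_mul_self_mem {A : Type*} [CStarAlgebra A] [PartialOrder A]
    [StarOrderedRing A] {I : Ideal A} (hI : IsClosed (I : Set A)) {b : A} (hb : 0 ≤ b)
    (h : b * b ∈ I) : b ∈ I := by
  refine hI.closure_subset (Metric.mem_closure_iff.2 fun ε hε => ?_)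
  obtain ⟨r, -, -, hr⟩ := exists_resolvent_approx hb (half_pos hε)
  refine ⟨r * (b * b), I.mul_mem_left r h, ?_⟩
  rw [dist_comm, dist_eq_norm]
  linarith

/-- A square-summable sequence in a closed two-sided ideal of a C⋆-algebra has a common left factor
in the ideal, with bounded right factors. -/
theorem exists_common_left_factor {A : Type*} [CStarAlgebra A] {I : Ideal A} [I.IsTwoSided]
    (hI : IsClosed (I : Set A)) {x : ℕ → A} (hx : ∀ n, x n ∈ I)
    (hs : Summable fun n => ‖x n‖ ^ 2) :
    ∃ b ∈ I, ∃ c : ℕ → A, ∀ n, x n = b * c n ∧ ‖c n‖ ≤ ‖b‖ := by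
  let _ := CStarAlgebra.spectralOrder A
  let _ := CStarAlgebra.spectralOrderedRing A
  have hsum : Summable fun n => x n * star (x n) :=
    .of_norm (by simpa [CStarRing.norm_self_mul_star, sq] using hs)
  set h : A := ∑' n, x n * star (x n)
  have hle : ∀ n, x n * star (x n) ≤ h := fun n =>
    hsum.le_tsum n fun _ _ => mul_star_self_nonneg _
  have h0 : 0 ≤ h := tsum_nonneg fun _ => mul_star_self_nonneg _
  have hmem : h ∈ I := hI.mem_of_tendsto hsum.hasSum
    (Eventually.of_forall fun s => I.sum_mem fun n _ => I.mul_mem_right _ (hx n))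
  set s := CFC.sqrt h
  set b := CFC.sqrt s
  have hs2 : s * s = h := CFC.sqrt_mul_sqrt_self h h0
  have hb2 : b * b = s := CFC.sqrt_mul_sqrt_self s (CFC.sqrt_nonneg h)
  have hsI : s ∈ I := mem_of_mul_self_mem hI (CFC.sqrt_nonneg h) (hs2 ▸ hmem)
  have hbI : b ∈ I := mem_of_mul_self_mem hI (CFC.sqrt_nonneg s) (hb2 ▸ hsI)
  choose c hc using fun n => exists_eq_mul_of_mul_star_le (b := b) (x := x n)
    (CFC.sqrt_nonneg s) (by rw [hb2, hs2]; exact hle n)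
  exact ⟨b, hbI, c, hc⟩

/-- The uniform boundedness principle for a family of bounded quasi-seminorms with a common modulus
of concavity. The quasi-seminorms need not be continuous, so the sublevel sets need not be
closed. -/
theorem exists_uniform_bound {ι E : Type*} [NormedAddCommGroup E] [NormedSpace ℂ E]
    [CompleteSpace E] (p : ι → E → ℝ) {C : ℝ} (hC : 0 ≤ C)
    (hsmul : ∀ i (α : ℂ) u, p i (α • u) = ‖α‖ * p i u)
    (hadd : ∀ i u v, p i (u + v) ≤ C * (p i u + p i v))
    (hbdd : ∀ i, ∃ K : ℝ, 0 ≤ K ∧ ∀ u, p i u ≤ K * ‖u‖)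
    (hpt : ∀ u, ∃ M : ℝ, ∀ i, p i u ≤ M) :
    ∃ K : ℝ, 0 ≤ K ∧ ∀ i u, p i u ≤ K * ‖u‖ := by
  let S : ℕ → Set E := fun N => {u | ∀ i, p i u ≤ N}
  have hneg : ∀ i u, p i (-u) = p i u := fun i u => by simpa using hsmul i (-1) u
  have hclos : ∀ N u, u ∈ closure (S N) → ∀ i, p i u ≤ C * (1 + N) := by
    intro N u hu i
    obtain ⟨K, hK0, hK⟩ := hbdd i
    obtain ⟨v, hv, huv⟩ := Metric.mem_closure_iff.1 hu (1 / (K + 1)) (by positivity)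
    rw [dist_eq_norm, lt_div_iff₀ (by positivity)] at huv
    have h1 := hadd i (u - v) v
    rw [sub_add_cancel] at h1
    refine h1.trans (mul_le_mul_of_nonneg_left (add_le_add ?_ (hv i)) hC)
    nlinarith [hK (u - v), norm_nonneg (u - v)]
  have hcover : ⋃ N, closure (S N) = Set.univ := by
    refine Set.eq_univ_of_forall fun u => ?_
    obtain ⟨M, hM⟩ := hpt u
    obtain ⟨N, hN⟩ := exists_nat_ge M
    exact Set.mem_iUnion.2 ⟨N, subset_closure fun i => (hM i).trans hN⟩
  obtain ⟨N, a, ha⟩ := nonempty_interior_of_iUnion_of_closed (fun _ => isClosed_closure) hcover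
  obtain ⟨ρ, hρ, hball⟩ := Metric.mem_nhds_iff.1 (mem_interior_iff_mem_nhds.1 ha)
  set L : ℝ := C * (C * (1 + N) + C * (1 + N))
  have hsmall : ∀ i u, ‖u‖ < ρ → p i u ≤ L := by
    intro i u hu
    have h1 := hadd i (a + u) (-a)
    rw [add_neg_cancel_comm, hneg] at h1
    refine h1.trans (mul_le_mul_of_nonneg_left (add_le_add ?_ ?_) hC)
    · exact hclos N _ (hball (by simpa [dist_eq_norm] using hu)) i
    · exact hclos N _ (hball (Metric.mem_ball_self hρ)) i
  refine ⟨2 * L / ρ, by positivity, fun i u => ?_⟩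
  rcases eq_or_ne u 0 with rfl | hu
  · simpa using (hsmul i 0 0).le
  have hu' : 0 < ‖u‖ := norm_pos_iff.2 hu
  have h1 := hsmall i (((ρ / (2 * ‖u‖) : ℝ) : ℂ) • u) (by
    rw [norm_smul, Complex.norm_real, Real.norm_of_nonneg (by positivity)]
    field_simp
    norm_num)
  rw [hsmul, Complex.norm_real, Real.norm_of_nonneg (by positivity), div_mul_eq_mul_div,
    div_le_iff₀ (by positivity)] at h1
  rw [div_mul_eq_mul_div, le_div_iff₀ hρ]
  linarith

theorem derivation_bounded_on_continuity_ideal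
    (A X : Type*) [NormedRing A] [StarRing A] [CStarRing A]
    [NormedAlgebra ℂ A] [CompleteSpace A] [StarModule ℂ A]
    [AddCommGroup X] [Module ℂ X]
    [Module A X] [Module Aᵐᵒᵖ X] [SMulCommClass A Aᵐᵒᵖ X]
    [IsScalarTower ℂ A X] [IsScalarTower ℂ Aᵐᵒᵖ X]
    (q : X → ℝ) (C : ℝ) (hC : 1 ≤ C)
    (hq_nonneg : ∀ x : X, 0 ≤ q x)
    (hq_def : ∀ x : X, q x = 0 ↔ x = 0)
    (hq_smul : ∀ (α : ℂ) (x : X), q (α • x) = ‖α‖ * q x)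
    (hq_add : ∀ x y : X, q (x + y) ≤ C * (q x + q y))
    (hq_mod : ∀ (a b : A) (x : X), q (a • (op b • x)) ≤ ‖a‖ * ‖b‖ * q x)
    (δ : A →ₗ[ℂ] X)
    (hδ : ∀ a b : A, δ (a * b) = op b • δ a + a • δ b)
    (J : Set A)
    (hJ : J = {x : A | ∃ K : ℝ, 0 ≤ K ∧ ∀ u : A, q (δ (x * u)) ≤ K * ‖u‖}) :
    ∃ K : ℝ, 0 ≤ K ∧ ∀ x ∈ J, q (δ x) ≤ K * ‖x‖ := by
  let _ : CStarAlgebra A := {}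
  have hC0 : 0 ≤ C := zero_le_one.trans hC
  have hone : ‖(1 : A)‖ ≤ 1 := by
    rcases subsingleton_or_nontrivial A with hA | hA
    · simp [Subsingleton.elim (1 : A) 0]
    · exact CStarRing.norm_one.le
  have hneg : ∀ y, q (-y) = q y := fun y => by simpa using hq_smul (-1) y
  have hleft : ∀ (a : A) (y : X), q (a • y) ≤ ‖a‖ * q y := fun a y => by
    have h1 := hq_mod a 1 y
    rw [op_one, one_smul] at h1
    refine h1.trans (mul_le_mul_of_nonneg_right ?_ (hq_nonneg y))
    exact mul_le_of_le_one_right (norm_nonneg a) hone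
  have hright : ∀ (a : A) (y : X), q (op a • y) ≤ ‖a‖ * q y := fun a y => by
    have h1 := hq_mod 1 a y
    rw [one_smul] at h1
    refine h1.trans (mul_le_mul_of_nonneg_right ?_ (hq_nonneg y))
    exact mul_le_of_le_one_left (norm_nonneg a) hone
  -- Membership in `J` is boundedness of `u ↦ x • δ u`.
  have hJ_iff : ∀ x, x ∈ J ↔ ∃ K : ℝ, 0 ≤ K ∧ ∀ u : A, q (x • δ u) ≤ K * ‖u‖ := by
    intro x
    have hqx := hq_nonneg (δ x)
    rw [hJ]
    constructor
    · rintro ⟨K, hK, h⟩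
      refine ⟨C * (K + q (δ x)), by positivity, fun u => ?_⟩
      have h1 := hq_add (δ (x * u)) (-(op u • δ x))
      have h2 : δ (x * u) + -(op u • δ x) = x • δ u := by rw [hδ]; abel
      rw [h2, hneg] at h1
      refine h1.trans ?_
      rw [mul_assoc]
      exact mul_le_mul_of_nonneg_left (by linarith [h u, hright u (δ x)]) hC0
    · rintro ⟨K, hK, h⟩
      refine ⟨C * (K + q (δ x)), by positivity, fun u => ?_⟩
      rw [hδ, mul_assoc]
      refine (hq_add _ _).trans ?_
      exact mul_le_mul_of_nonneg_left (by linarith [h u, hright u (δ x)]) hC0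
  let I : Ideal A :=
    { carrier := J
      zero_mem' := (hJ_iff 0).2 ⟨0, le_rfl, fun u => by simp [(hq_def 0).2 rfl]⟩
      add_mem' := by
        intro x y hx hy
        obtain ⟨K, hK, hx⟩ := (hJ_iff x).1 hx
        obtain ⟨L, hL, hy⟩ := (hJ_iff y).1 hy
        refine (hJ_iff _).2 ⟨C * (K + L), by positivity, fun u => ?_⟩
        rw [add_smul, mul_assoc]
        exact (hq_add _ _).trans (mul_le_mul_of_nonneg_left (by linarith [hx u, hy u]) hC0)
      smul_mem' := by
        intro a x hx
        obtain ⟨K, hK, hx⟩ := (hJ_iff x).1 hx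
        refine (hJ_iff _).2 ⟨‖a‖ * K, by positivity, fun u => ?_⟩
        rw [smul_eq_mul, mul_smul, mul_assoc]
        exact (hleft _ _).trans (mul_le_mul_of_nonneg_left (hx u) (norm_nonneg a)) }
  have hI_mem : ∀ x, x ∈ I ↔ x ∈ J := fun x => Iff.rfl
  have hI_two : I.IsTwoSided := ⟨fun {x} a hx => by
    rw [hI_mem, hJ] at hx ⊢
    obtain ⟨K, hK, hx⟩ := hx
    refine ⟨K * ‖a‖, by positivity, fun u => ?_⟩
    rw [mul_assoc, mul_assoc]
    exact (hx _).trans (mul_le_mul_of_nonneg_left (norm_mul_le a u) hK)⟩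
  have hI_closed : IsClosed (I : Set A) := by
    refine isClosed_of_closure_subset fun x hx => ?_
    obtain ⟨K, hK, hunif⟩ := exists_uniform_bound
      (ι := {y : A // y ∈ J ∧ ‖y‖ ≤ ‖x‖ + 1}) (fun y u => q (y.1 • δ u)) hC0
      (fun y α u => by rw [map_smul, smul_comm y.1 α, hq_smul])
      (fun y u v => by rw [map_add, smul_add]; exact hq_add _ _)
      (fun y => (hJ_iff y.1).1 y.2.1)
      (fun u => ⟨(‖x‖ + 1) * q (δ u), fun y => (hleft _ _).trans
        (mul_le_mul_of_nonneg_right y.2.2 (hq_nonneg _))⟩)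
    refine (hJ_iff x).2 ⟨C * K, by positivity, fun u => ?_⟩
    obtain ⟨y, hyI, hy⟩ := mem_closure_iff_seq_limit.1 hx
    have hnear : ∀ᶠ n in atTop, ‖y n‖ ≤ ‖x‖ + 1 :=
      hy.norm.eventually_le_const (lt_add_one _)
    have hlim : Tendsto (fun n => C * (‖x - y n‖ * q (δ u) + K * ‖u‖)) atTop
        (𝓝 (C * (‖x - x‖ * q (δ u) + K * ‖u‖))) :=
      (((tendsto_const_nhds.sub hy).norm.mul_const _).add_const _).const_mul _
    rw [sub_self, norm_zero, zero_mul, zero_add, ← mul_assoc] at hlim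
    refine ge_of_tendsto hlim (hnear.mono fun n hn => ?_)
    have h1 := hq_add ((x - y n) • δ u) (y n • δ u)
    rw [← add_smul, sub_add_cancel] at h1
    exact h1.trans (mul_le_mul_of_nonneg_left
      (add_le_add (hleft _ _) (hunif ⟨y n, hyI n, hn⟩ u)) hC0)
  by_contra! hunb
  have hseq : ∀ n : ℕ, ∃ x ∈ I, ‖x‖ ^ 2 = (1 / 4 : ℝ) ^ n ∧ (n : ℝ) < q (δ x) := by
    intro n
    obtain ⟨x, hx, hlt⟩ := hunb (n * 2 ^ n) (by positivity)
    have hx0 : x ≠ 0 := by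
      rintro rfl
      simp [(hq_def 0).2 rfl] at hlt
    have hxpos : 0 < ‖x‖ := norm_pos_iff.2 hx0
    set t : ℝ := (1 / 2) ^ n / ‖x‖ with ht
    have htpos : 0 < t := by positivity
    have htn : ‖(t : ℂ)‖ = t := by rw [Complex.norm_real, Real.norm_of_nonneg htpos.le]
    refine ⟨(t : ℂ) • x, ?_, ?_, ?_⟩
    · rw [← smul_one_mul]
      exact I.mul_mem_left _ hx
    · rw [norm_smul, htn, ht, div_mul_cancel₀ _ hxpos.ne', ← pow_mul, mul_comm, pow_mul]
      norm_num
    · rw [map_smul, hq_smul, htn]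
      refine lt_of_eq_of_lt ?_ (mul_lt_mul_of_pos_left hlt htpos)
      rw [ht, one_div, inv_pow]
      field_simp
  choose x hxI hxn hxq using hseq
  obtain ⟨b, hbI, c, hbc⟩ := exists_common_left_factor hI_closed hxI (by
    simp only [hxn]
    exact summable_geometric_of_lt_one (by norm_num) (by norm_num))
  rw [hI_mem, hJ] at hbI
  obtain ⟨K, hK, hb⟩ := hbI
  obtain ⟨n, hn⟩ := exists_nat_ge (K * ‖b‖)
  have h1 := hb (c n)
  rw [← (hbc n).1] at h1
  linarith [hxq n, mul_le_mul_of_nonneg_left (hbc n).2 hK]
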